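/- For every K > 0 and J ∈ ℝ, the magnetization per particle m_n satisfies, under the measures P_{n,K,J}, a large deviation principle on [−1,1] with speed n and rate function I_{K,J}(m) = I(m) − (K/3)·m³ − (J/2)·m² − inf_{y ∈ [−1,1]} { I(y) − (K/3)·y³ − (J/2)·y² }; that is, for every closed set F ⊆ [−1,1], limsup_{n→∞} (1/n)·log P_{n,K,J}(m_n ∈ F) ≤ −inf_{m ∈ F} I_{K,J}(m), and for every open set G ⊆ [−1,1], liminf_{n→∞} (1/n)·log P_{n,K,J}(m_n ∈ G) ≥ −inf_{m ∈ G} I_{K,J}(m). -/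

import Mathlib

/-!
The argument is by the method of types. A configuration with `k` spins up has magnetization
`levelMag n k = 2 k / n - 1`, there are `n.choose k` of them, and
`exp (-n I(m)) / (n + 1) ≤ n.choose k ≤ exp (-n I(m))` with `m = levelMag n k`
(`exp_le_choose`, `choose_le_exp`). Both bounds come from expanding `(k + (n - k)) ^ n`: the `k`-th
term is at most the whole sum, and it is the largest of the `n + 1` terms (`binomial_mode`).

Multiplying by the Gibbs factor, the level `m` has weight `exp (-n φ(m))` up to a factor `n + 1`,
where `φ = phiKJ K J`. As there are `n + 1` levels, the weight of `m_n ∈ A` is at most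
`(n + 1) exp (-n inf_A φ)` (`gibbsSum_le`) and at least `exp (-n φ(m)) / (n + 1)` for each
attainable `m ∈ A` (`exp_le_gibbsSum`). Applying these to the event and to the partition function,
and using that `φ` is continuous and attainable magnetizations are dense in `[-1, 1]`, gives both
bounds, the error being `2 log (n + 1) / n → 0`.
-/

open MeasureTheory ProbabilityTheory Real Filter

noncomputable section

/-- The spin value `±1` associated with a Boolean. -/
def spin (b : Bool) : ℝ := if b then 1 else -1

/-- Total magnetization `S_n(x) = ∑ i, x_i`. -/
def totalMag (n : ℕ) (x : Fin n → Bool) : ℝ := ∑ i, spin (x i)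

/-- Magnetization per particle `m_n(x) = S_n(x)/n`. -/
def magPP (n : ℕ) (x : Fin n → Bool) : ℝ := totalMag n x / n

/-- Boltzmann–Gibbs weight of a configuration in the cubic Curie–Weiss model
(the reference factor `2^{-n}` is constant and cancels upon normalization). -/
def cubicWeight (n : ℕ) (K J : ℝ) (x : Fin n → Bool) : ℝ :=
  Real.exp (n * (K / 3 * (magPP n x) ^ 3 + J / 2 * (magPP n x) ^ 2))

/-- The cubic Curie–Weiss Boltzmann–Gibbs probability measure `P_{n,K,J}`. -/
def cubicMeasure (n : ℕ) (K J : ℝ) : Measure (Fin n → Bool) :=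
  (∑ x : Fin n → Bool, ENNReal.ofReal (cubicWeight n K J x))⁻¹ •
    ∑ x : Fin n → Bool, ENNReal.ofReal (cubicWeight n K J x) • Measure.dirac x

/-- The binary relative entropy `I(m)`. -/
def binEnt (m : ℝ) : ℝ :=
  (1 - m) / 2 * Real.log ((1 - m) / 2) + (1 + m) / 2 * Real.log ((1 + m) / 2)

/-- The function `φ_{K,J}(x) = I(x) − (K/3)x³ − (J/2)x²`. -/
def phiKJ (K J : ℝ) (x : ℝ) : ℝ := binEnt x - K / 3 * x ^ 3 - J / 2 * x ^ 2

/-- The large deviations rate function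
`I_{K,J}(m) = I(m) − (K/3)m³ − (J/2)m² − inf_{y ∈ [−1,1]} (I(y) − (K/3)y³ − (J/2)y²)`. -/
def rateKJ (K J : ℝ) (m : ℝ) : ℝ :=
  phiKJ K J m - sInf (phiKJ K J '' Set.Icc (-1) 1)

end


/-! ### Entropy bounds for binomial coefficients -/

/-- Consecutive factors between `j!` and `k!` are at least `k` above `k` and at most `k` below it,
so `j! / k! ≥ k ^ (j - k)` whichever of `j`, `k` is larger. -/
lemma factorial_mul_pow_le (k j : ℕ) :
    k.factorial * k ^ j ≤ j.factorial * k ^ k := by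
  rcases le_total k j with h | h
  · have h1 := Nat.factorial_mul_pow_sub_le_factorial h
    calc k.factorial * k ^ j = (k.factorial * k ^ (j - k)) * k ^ k := by
          rw [mul_assoc, ← pow_add, Nat.sub_add_cancel h]
      _ ≤ _ := Nat.mul_le_mul_right _ h1
  · have h1 : k.factorial ≤ j.factorial * k ^ (k - j) := by
      have h2 := Nat.factorial_mul_descFactorial (n := k) (k := k - j) (Nat.sub_le _ _)
      rw [Nat.sub_sub_self h] at h2
      rw [← h2]
      exact Nat.mul_le_mul_left _ (Nat.descFactorial_le_pow _ _)
    calc k.factorial * k ^ j ≤ (j.factorial * k ^ (k - j)) * k ^ j := Nat.mul_le_mul_right _ h1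
      _ = _ := by rw [mul_assoc, ← pow_add, Nat.sub_add_cancel h]

/-- The binomial law with success probability `k / n` has its mode at `k` (stated after
multiplication by `n ^ n`). -/
lemma binomial_mode {n k j : ℕ} (hk : k ≤ n) (hj : j ≤ n) :
    n.choose j * (k ^ j * (n - k) ^ (n - j)) ≤ n.choose k * (k ^ k * (n - k) ^ (n - k)) := by
  have h1 := factorial_mul_pow_le k j
  have h2 := factorial_mul_pow_le (n - k) (n - j)
  have h3 := Nat.choose_mul_factorial_mul_factorial hk
  have h4 := Nat.choose_mul_factorial_mul_factorial hj
  have hpos : 0 < (k.factorial * (n - k).factorial) * (j.factorial * (n - j).factorial) := by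
    positivity
  refine Nat.le_of_mul_le_mul_left ?_ hpos
  calc _ = (n.choose j * j.factorial * (n - j).factorial) *
          ((k.factorial * k ^ j) * ((n - k).factorial * (n - k) ^ (n - j))) := by ring
    _ ≤ (n.choose j * j.factorial * (n - j).factorial) *
          ((j.factorial * k ^ k) * ((n - j).factorial * (n - k) ^ (n - k))) := by gcongr
    _ = (n.choose k * k.factorial * (n - k).factorial) *
          ((j.factorial * k ^ k) * ((n - j).factorial * (n - k) ^ (n - k))) := by rw [h3, h4]
    _ = _ := by ring

lemma choose_mul_le_pow {n k : ℕ} (hk : k ≤ n) :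
    n.choose k * (k ^ k * (n - k) ^ (n - k)) ≤ n ^ n := by
  have h := add_pow k (n - k) n
  rw [Nat.add_sub_cancel' hk] at h
  rw [h]
  have := Finset.single_le_sum
    (f := fun m => k ^ m * (n - k) ^ (n - m) * n.choose m)
    (fun _ _ => Nat.zero_le _) (Finset.mem_range.2 (Nat.lt_succ_of_le hk))
  calc _ = k ^ k * (n - k) ^ (n - k) * n.choose k := by ring
    _ ≤ _ := this

lemma pow_le_choose_mul {n k : ℕ} (hk : k ≤ n) :
    n ^ n ≤ (n + 1) * (n.choose k * (k ^ k * (n - k) ^ (n - k))) := by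
  have h := add_pow k (n - k) n
  rw [Nat.add_sub_cancel' hk] at h
  rw [h]
  refine (Finset.sum_le_card_nsmul (Finset.range (n + 1)) _
    (n.choose k * (k ^ k * (n - k) ^ (n - k))) ?_).trans ?_
  · intro j hj
    have := binomial_mode hk (Nat.lt_succ_iff.1 (Finset.mem_range.1 hj))
    calc _ = n.choose j * (k ^ j * (n - k) ^ (n - j)) := by rw [Nat.cast_id]; ring
      _ ≤ _ := this
  · simp

/-- The magnetization per particle of a configuration of `n` spins, `k` of which are `+1`. -/
noncomputable def levelMag (n k : ℕ) : ℝ := 2 * ((k : ℝ) / n) - 1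

lemma levelMag_mem {n k : ℕ} (hk : k ≤ n) : levelMag n k ∈ Set.Icc (-1 : ℝ) 1 := by
  have h0 : (0 : ℝ) ≤ (k : ℝ) / n := by positivity
  have h1 : (k : ℝ) / n ≤ 1 := div_le_one_of_le₀ (by exact_mod_cast hk) (by positivity)
  unfold levelMag
  constructor <;> linarith

lemma exp_mul_log_div {n k : ℕ} (hn : 0 < n) :
    Real.exp (n * ((k : ℝ) / n * Real.log ((k : ℝ) / n))) = (k : ℝ) ^ k / (n : ℝ) ^ k := by
  have hn' : (n : ℝ) ≠ 0 := by positivity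
  rcases Nat.eq_zero_or_pos k with rfl | hk
  · simp
  · have : (0 : ℝ) < (k : ℝ) / n := by positivity
    rw [← mul_assoc, mul_div_cancel₀ _ hn', mul_comm, Real.exp_mul, Real.exp_log this,
      Real.rpow_natCast, div_pow]

/-- The convention `0 log 0 = 0` matches `0 ^ 0 = 1`, so the boundary cases `k = 0` and `k = n`
are included. -/
lemma exp_binEnt_levelMag {n k : ℕ} (hn : 0 < n) (hk : k ≤ n) :
    Real.exp (n * binEnt (levelMag n k)) * (n : ℝ) ^ n
      = (k : ℝ) ^ k * ((n - k : ℕ) : ℝ) ^ (n - k) := by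
  have hn' : (n : ℝ) ≠ 0 := by positivity
  have e1 : (1 - levelMag n k) / 2 = ((n - k : ℕ) : ℝ) / n := by
    rw [Nat.cast_sub hk, levelMag]; field_simp; ring
  have e2 : (1 + levelMag n k) / 2 = (k : ℝ) / n := by
    rw [levelMag]; ring
  rw [binEnt, e1, e2, mul_add, Real.exp_add, exp_mul_log_div hn, exp_mul_log_div hn]
  have : (n : ℝ) ^ n = (n : ℝ) ^ (n - k) * (n : ℝ) ^ k := by
    rw [← pow_add, Nat.sub_add_cancel hk]
  rw [this]
  field_simp

lemma choose_le_exp {n k : ℕ} (hn : 0 < n) (hk : k ≤ n) :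
    (n.choose k : ℝ) ≤ Real.exp (-(n * binEnt (levelMag n k))) := by
  have h : (n.choose k : ℝ) * ((k : ℝ) ^ k * ((n - k : ℕ) : ℝ) ^ (n - k)) ≤ (n : ℝ) ^ n := by
    exact_mod_cast choose_mul_le_pow hk
  have hnn : (0 : ℝ) < (n : ℝ) ^ n := by positivity
  rw [← exp_binEnt_levelMag hn hk, ← mul_assoc] at h
  rw [Real.exp_neg, le_inv_comm₀ (by exact_mod_cast Nat.choose_pos hk) (Real.exp_pos _),
    ← one_div, le_div_iff₀ (by exact_mod_cast Nat.choose_pos hk)]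
  nlinarith

lemma exp_le_choose {n k : ℕ} (hn : 0 < n) (hk : k ≤ n) :
    Real.exp (-(n * binEnt (levelMag n k))) ≤ (n + 1) * (n.choose k : ℝ) := by
  have h : (n : ℝ) ^ n ≤
      (n + 1) * ((n.choose k : ℝ) * ((k : ℝ) ^ k * ((n - k : ℕ) : ℝ) ^ (n - k))) := by
    exact_mod_cast pow_le_choose_mul hk
  have hnn : (0 : ℝ) < (n : ℝ) ^ n := by positivity
  rw [← exp_binEnt_levelMag hn hk] at h
  rw [Real.exp_neg, ← one_div, div_le_iff₀ (Real.exp_pos _)]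
  refine le_of_mul_le_mul_right ?_ hnn
  linarith

/-! ### Partition sums over level sets of the magnetization -/

/-- The number of `+1` spins of a configuration. -/
def upCount (n : ℕ) (x : Fin n → Bool) : ℕ := (Finset.univ.filter fun i => x i = true).card

lemma upCount_le (n : ℕ) (x : Fin n → Bool) : upCount n x ≤ n := by
  simpa [upCount] using Finset.card_filter_le (Finset.univ : Finset (Fin n)) (fun i => x i = true)

lemma card_upCount_eq (n k : ℕ) :
    (Finset.univ.filter fun x : Fin n → Bool => upCount n x = k).card = n.choose k := by
  have h : (Finset.powersetCard k (Finset.univ : Finset (Fin n))).card = n.choose k := by simp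
  rw [← h]
  refine Finset.card_bij' (fun x _ => Finset.univ.filter fun i => x i = true)
    (fun s _ => fun i => decide (i ∈ s)) ?_ ?_ ?_ ?_
  · intro x hx
    rw [Finset.mem_filter] at hx
    simpa [Finset.mem_powersetCard, upCount] using hx.2
  · intro s hs
    rw [Finset.mem_filter]
    simpa [Finset.mem_powersetCard, upCount] using hs
  · intro x _
    ext i
    simp
  · intro s _
    ext i
    simp

lemma magPP_eq {n : ℕ} (hn : 0 < n) (x : Fin n → Bool) :
    magPP n x = levelMag n (upCount n x) := by
  have hn' : (n : ℝ) ≠ 0 := by positivity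
  have h : totalMag n x = 2 * (upCount n x : ℝ) - n := by
    have h1 : ∀ i, spin (x i) = 2 * (if x i = true then (1 : ℝ) else 0) - 1 := by
      intro i
      cases x i <;> norm_num [spin]
    rw [totalMag, Finset.sum_congr rfl fun i _ => h1 i, Finset.sum_sub_distrib, ← Finset.mul_sum]
    simp [upCount]
  rw [magPP, h, levelMag]
  field_simp

open Classical in
/-- The unnormalized Gibbs weight of the event `m_n ∈ A`. -/
noncomputable def gibbsSum (n : ℕ) (K J : ℝ) (A : Set ℝ) : ℝ :=
  ∑ x : Fin n → Bool with magPP n x ∈ A, cubicWeight n K J x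

lemma cubicMeasure_eq (n : ℕ) (K J : ℝ) (A : Set ℝ) :
    cubicMeasure n K J {x | magPP n x ∈ A}
      = ENNReal.ofReal (gibbsSum n K J A / gibbsSum n K J Set.univ) := by
  classical
  have hw : ∀ x, 0 < cubicWeight n K J x := fun x => Real.exp_pos _
  have hZ : 0 < gibbsSum n K J Set.univ := by
    simp only [gibbsSum, Set.mem_univ, Finset.filter_true]
    exact Finset.sum_pos (fun x _ => hw x) Finset.univ_nonempty
  rw [ENNReal.ofReal_div_of_pos hZ, cubicMeasure, Measure.smul_apply, smul_eq_mul,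
    Measure.finsetSum_apply, ENNReal.div_eq_inv_mul]
  congr 1
  · simp only [gibbsSum, Set.mem_univ, Finset.filter_true]
    rw [ENNReal.ofReal_sum_of_nonneg fun x _ => (hw x).le]
  · rw [gibbsSum, ENNReal.ofReal_sum_of_nonneg fun x _ => (hw x).le, Finset.sum_filter]
    refine Finset.sum_congr rfl fun x _ => ?_
    by_cases hx : magPP n x ∈ A <;> simp [Measure.dirac_apply, hx]

lemma gibbsSum_univ_eq {n : ℕ} (hn : 0 < n) (K J : ℝ) :
    gibbsSum n K J Set.univ = gibbsSum n K J (Set.Icc (-1) 1) := by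
  unfold gibbsSum
  congr 1
  ext x
  have := levelMag_mem (upCount_le n x)
  rw [← magPP_eq hn] at this
  simp only [Finset.mem_filter, Finset.mem_univ, true_and, Set.mem_univ, this]

lemma cubicWeight_eq {n : ℕ} (hn : 0 < n) (K J : ℝ) {k : ℕ} {x : Fin n → Bool}
    (hx : upCount n x = k) :
    cubicWeight n K J x =
      Real.exp (n * (K / 3 * levelMag n k ^ 3 + J / 2 * levelMag n k ^ 2)) := by
  rw [cubicWeight, magPP_eq hn, hx]

lemma exp_phi_split (n : ℕ) (K J m : ℝ) :
    Real.exp (-(n * phiKJ K J m)) =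
      Real.exp (-(n * binEnt m)) * Real.exp (n * (K / 3 * m ^ 3 + J / 2 * m ^ 2)) := by
  rw [← Real.exp_add, phiKJ]
  congr 1
  ring

/-- A single magnetization level in `A` already carries weight `exp (-n φ) / (n + 1)`. -/
lemma exp_le_gibbsSum {n k : ℕ} (hn : 0 < n) (hk : k ≤ n) (K J : ℝ) {A : Set ℝ}
    (hA : levelMag n k ∈ A) :
    Real.exp (-(n * phiKJ K J (levelMag n k))) ≤ (n + 1) * gibbsSum n K J A := by
  classical
  have h1 : (n.choose k : ℝ) *
      Real.exp (n * (K / 3 * levelMag n k ^ 3 + J / 2 * levelMag n k ^ 2))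
        ≤ gibbsSum n K J A := by
    rw [← card_upCount_eq, ← nsmul_eq_mul, ← Finset.sum_const]
    calc _ = ∑ x : Fin n → Bool with upCount n x = k, cubicWeight n K J x :=
          Finset.sum_congr rfl fun x hx =>
            (cubicWeight_eq hn K J (Finset.mem_filter.1 hx).2).symm
      _ ≤ _ := by
          refine Finset.sum_le_sum_of_subset_of_nonneg ?_ fun x _ _ => (Real.exp_pos _).le
          intro x hx
          have hx' := (Finset.mem_filter.1 hx).2
          simpa [magPP_eq hn, hx'] using hA
  rw [exp_phi_split]
  calc _ ≤ ((n + 1) * (n.choose k : ℝ)) * _ :=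
        mul_le_mul_of_nonneg_right (exp_le_choose hn hk) (Real.exp_pos _).le
    _ ≤ _ := by
        rw [mul_assoc]
        exact mul_le_mul_of_nonneg_left h1 (by positivity)

/-- There are only `n + 1` magnetization levels, each of weight at most `exp (-n φ)`. -/
lemma gibbsSum_le {n : ℕ} (hn : 0 < n) (K J b : ℝ) {A : Set ℝ}
    (hb : ∀ m ∈ A, b ≤ phiKJ K J m) :
    gibbsSum n K J A ≤ (n + 1) * Real.exp (-(n * b)) := by
  classical
  unfold gibbsSum
  rw [← Finset.sum_fiberwise_of_maps_to (t := Finset.range (n + 1)) (g := upCount n)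
    (fun x _ => Finset.mem_range.2 (Nat.lt_succ_of_le (upCount_le n x)))]
  refine (Finset.sum_le_card_nsmul _ _ (Real.exp (-(n * b))) ?_).trans ?_
  · intro k hk
    have hk' : k ≤ n := Nat.lt_succ_iff.1 (Finset.mem_range.1 hk)
    by_cases hA : levelMag n k ∈ A
    · calc _ ≤ ∑ x : Fin n → Bool with upCount n x = k, cubicWeight n K J x := by
            refine Finset.sum_le_sum_of_subset_of_nonneg ?_ fun x _ _ => (Real.exp_pos _).le
            intro x hx
            simpa using (Finset.mem_filter.1 hx).2
        _ = (n.choose k : ℝ) *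
            Real.exp (n * (K / 3 * levelMag n k ^ 3 + J / 2 * levelMag n k ^ 2)) := by
            rw [Finset.sum_congr rfl fun x hx =>
              cubicWeight_eq hn K J (Finset.mem_filter.1 hx).2, Finset.sum_const,
              nsmul_eq_mul, card_upCount_eq]
        _ ≤ Real.exp (-(n * phiKJ K J (levelMag n k))) := by
            rw [exp_phi_split]
            exact mul_le_mul_of_nonneg_right (choose_le_exp hn hk') (Real.exp_pos _).le
        _ ≤ _ := by
            have := hb _ hA
            gcongr
    · rw [Finset.sum_eq_zero]
      · exact (Real.exp_pos _).le
      · intro x hx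
        simp only [Finset.mem_filter, Finset.mem_univ, true_and] at hx
        rw [magPP_eq hn, hx.2] at hx
        exact absurd hx.1 hA
  · simp

/-! ### Passage to the limit -/

lemma continuous_phiKJ (K J : ℝ) : Continuous (phiKJ K J) := by
  have h : Continuous binEnt :=
    (Real.continuous_mul_log.comp (f := fun m : ℝ => (1 - m) / 2) (by fun_prop)).add
      (Real.continuous_mul_log.comp (f := fun m : ℝ => (1 + m) / 2) (by fun_prop))
  unfold phiKJ
  fun_prop

/-- Every `m ∈ [-1, 1]` is a limit of attainable magnetizations. -/
lemma exists_levelMag_tendsto {m : ℝ} (hm : m ∈ Set.Icc (-1 : ℝ) 1) :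
    ∃ k : ℕ → ℕ, (∀ n, k n ≤ n) ∧ Tendsto (fun n => levelMag n (k n)) atTop (nhds m) := by
  have h0 : 0 ≤ (1 + m) / 2 := by linarith [hm.1]
  refine ⟨fun n => ⌊(1 + m) / 2 * (n : ℝ)⌋₊, fun n => ?_, ?_⟩
  · refine Nat.floor_le_of_le ?_
    have : (0 : ℝ) ≤ n := Nat.cast_nonneg n
    nlinarith [hm.2]
  · have h := ((tendsto_nat_floor_mul_div_atTop h0).comp
      (tendsto_natCast_atTop_atTop (R := ℝ))).const_mul 2 |>.sub_const 1
    have e : 2 * ((1 + m) / 2) - 1 = m := by ring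
    rw [e] at h
    exact h

lemma tendsto_log_succ_div : Tendsto (fun n : ℕ => 2 * Real.log (n + 1) / n) atTop (nhds 0) := by
  have h := (Real.tendsto_pow_log_div_mul_add_atTop 1 (-1) 1 one_ne_zero).comp
    (tendsto_atTop_add_const_right atTop (1 : ℝ) (tendsto_natCast_atTop_atTop (R := ℝ)))
  have h2 := h.const_mul 2
  rw [mul_zero] at h2
  refine h2.congr fun n => ?_
  simp [mul_div_assoc]

lemma log_div_le {n : ℕ} (hn : 0 < n) {p a : ℝ} (h : p ≤ Real.exp (n * a)) :
    ENNReal.log (ENNReal.ofReal p) / ((n : ℝ) : EReal) ≤ (a : EReal) := by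
  have hn' : (0 : ℝ) < n := by positivity
  rw [EReal.div_le_iff_le_mul (by exact_mod_cast hn') (EReal.coe_ne_top _), ← EReal.coe_mul]
  refine (ENNReal.log_le_log (ENNReal.ofReal_le_ofReal h)).trans ?_
  rw [ENNReal.log_ofReal_of_pos (Real.exp_pos _), Real.log_exp]

lemma le_log_div {n : ℕ} (hn : 0 < n) {p a : ℝ} (h : Real.exp (n * a) ≤ p) :
    (a : EReal) ≤ ENNReal.log (ENNReal.ofReal p) / ((n : ℝ) : EReal) := by
  have hn' : (0 : ℝ) < n := by positivity
  rw [EReal.le_div_iff_mul_le (by exact_mod_cast hn') (EReal.coe_ne_top _), ← EReal.coe_mul]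
  refine le_trans ?_ (ENNReal.log_le_log (ENNReal.ofReal_le_ofReal h))
  rw [ENNReal.log_ofReal_of_pos (Real.exp_pos _), Real.log_exp, mul_comm]

lemma exp_two_log_succ {n : ℕ} (hn : 0 < n) (c : ℝ) :
    Real.exp (n * (2 * Real.log (n + 1) / n + c)) = ((n : ℝ) + 1) ^ 2 * Real.exp (n * c) := by
  have hn' : (n : ℝ) ≠ 0 := by positivity
  have h1 : (0 : ℝ) < (n : ℝ) + 1 := by positivity
  rw [mul_add, Real.exp_add, mul_div_cancel₀ _ hn', mul_comm 2, Real.exp_mul, Real.exp_log h1]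
  norm_cast

lemma exists_phiKJ_min (K J : ℝ) : ∃ m₀ ∈ Set.Icc (-1 : ℝ) 1,
    (∀ y ∈ Set.Icc (-1 : ℝ) 1, phiKJ K J m₀ ≤ phiKJ K J y) ∧
      ∀ m, rateKJ K J m = phiKJ K J m - phiKJ K J m₀ := by
  obtain ⟨m₀, hm₀, hmin⟩ := isCompact_Icc.exists_isMinOn (Set.nonempty_Icc.2 (by norm_num))
    (continuous_phiKJ K J).continuousOn (s := Set.Icc (-1 : ℝ) 1)
  refine ⟨m₀, hm₀, fun y hy => hmin hy, fun m => ?_⟩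
  have h : IsLeast (phiKJ K J '' Set.Icc (-1) 1) (phiKJ K J m₀) :=
    ⟨⟨m₀, hm₀, rfl⟩, by rintro _ ⟨y, hy, rfl⟩; exact hmin hy⟩
  rw [rateKJ, h.csInf_eq]

lemma ldp_upper (K J : ℝ) {F : Set ℝ} (hF : IsClosed F) (hF1 : F ⊆ Set.Icc (-1) 1) :
    limsup (fun n : ℕ =>
        ENNReal.log (cubicMeasure n K J {x | magPP n x ∈ F}) / ((n : ℝ) : EReal)) atTop
      ≤ -(⨅ m ∈ F, ((rateKJ K J m : ℝ) : EReal)) := by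
  rcases F.eq_empty_or_nonempty with rfl | hne
  · have h : ∀ᶠ n : ℕ in atTop,
        ENNReal.log (cubicMeasure n K J {x | magPP n x ∈ (∅ : Set ℝ)}) / ((n : ℝ) : EReal)
          ≤ ⊥ := by
      filter_upwards [eventually_gt_atTop 0] with n hn
      have hn' : (0 : ℝ) < n := by positivity
      simp only [Set.mem_empty_iff_false, Set.ofPred_false, measure_empty, ENNReal.log_zero]
      rw [EReal.bot_div_of_pos_ne_top (by exact_mod_cast hn') (EReal.coe_ne_top _)]
    exact (limsup_le_of_le (h := h)).trans bot_le
  obtain ⟨m₀, hm₀, hmin, hrate⟩ := exists_phiKJ_min K J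
  obtain ⟨m₁, hm₁, hmin₁⟩ := (isCompact_Icc.of_isClosed_subset hF hF1).exists_isMinOn hne
    (continuous_phiKJ K J).continuousOn
  obtain ⟨k, hk, hlim⟩ := exists_levelMag_tendsto hm₀
  have hle : ((-rateKJ K J m₁ : ℝ) : EReal) ≤ -(⨅ m ∈ F, ((rateKJ K J m : ℝ) : EReal)) := by
    rw [EReal.coe_neg, EReal.neg_le_neg_iff]
    exact iInf₂_le m₁ hm₁
  refine le_trans ?_ hle
  have hT : Tendsto (fun n : ℕ => 2 * Real.log (n + 1) / n +
      (phiKJ K J (levelMag n (k n)) - phiKJ K J m₁)) atTop (nhds (-rateKJ K J m₁)) := by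
    have h := tendsto_log_succ_div.add
      ((((continuous_phiKJ K J).tendsto m₀).comp hlim).sub_const (phiKJ K J m₁))
    have e : 0 + (phiKJ K J m₀ - phiKJ K J m₁) = -rateKJ K J m₁ := by rw [hrate]; ring
    rw [e] at h
    exact h
  rw [← ((continuous_coe_real_ereal.tendsto _).comp hT).limsup_eq]
  refine limsup_le_limsup ?_
  filter_upwards [eventually_gt_atTop 0] with n hn
  rw [cubicMeasure_eq]
  refine log_div_le hn ?_
  have hup := gibbsSum_le hn K J (phiKJ K J m₁) (fun m hm => hmin₁ hm) (A := F)
  have hlow := exp_le_gibbsSum hn (hk n) K J (Set.mem_univ (levelMag n (k n)))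
  have hZ : 0 < gibbsSum n K J Set.univ :=
    pos_of_mul_pos_right ((Real.exp_pos _).trans_le hlow) (by positivity)
  rw [exp_two_log_succ hn, div_le_iff₀ hZ]
  refine hup.trans ?_
  calc ((n : ℝ) + 1) * Real.exp (-(n * phiKJ K J m₁))
      = (n + 1) * Real.exp (n * (phiKJ K J (levelMag n (k n)) - phiKJ K J m₁)) *
          Real.exp (-(n * phiKJ K J (levelMag n (k n)))) := by
        rw [mul_assoc, ← Real.exp_add]; congr 2; ring
    _ ≤ (n + 1) * Real.exp (n * (phiKJ K J (levelMag n (k n)) - phiKJ K J m₁)) *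
          ((n + 1) * gibbsSum n K J Set.univ) := by gcongr
    _ = _ := by ring

lemma ldp_lower (K J : ℝ) {U : Set ℝ} (hU : IsOpen U) :
    -(⨅ m ∈ U ∩ Set.Icc (-1) 1, ((rateKJ K J m : ℝ) : EReal)) ≤
      liminf (fun n : ℕ =>
        ENNReal.log (cubicMeasure n K J {x | magPP n x ∈ U ∩ Set.Icc (-1) 1})
          / ((n : ℝ) : EReal)) atTop := by
  rw [EReal.neg_le]
  refine le_iInf₂ fun m hm => ?_
  rw [EReal.neg_le, ← EReal.coe_neg]
  obtain ⟨m₀, hm₀, hmin, hrate⟩ := exists_phiKJ_min K J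
  obtain ⟨k, hk, hlim⟩ := exists_levelMag_tendsto hm.2
  have hT : Tendsto (fun n : ℕ => -(2 * Real.log (n + 1) / n +
      (phiKJ K J (levelMag n (k n)) - phiKJ K J m₀))) atTop (nhds (-rateKJ K J m)) := by
    have h := (tendsto_log_succ_div.add
      ((((continuous_phiKJ K J).tendsto m).comp hlim).sub_const (phiKJ K J m₀))).neg
    have e : -(0 + (phiKJ K J m - phiKJ K J m₀)) = -rateKJ K J m := by rw [hrate]; ring
    rw [e] at h
    exact h
  rw [← ((continuous_coe_real_ereal.tendsto _).comp hT).liminf_eq]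
  refine liminf_le_liminf ?_
  filter_upwards [eventually_gt_atTop 0, hlim.eventually (hU.mem_nhds hm.1)] with n hn hnU
  rw [cubicMeasure_eq]
  refine le_log_div hn ?_
  have hlow := exp_le_gibbsSum hn (hk n) K J
    (show levelMag n (k n) ∈ U ∩ Set.Icc (-1) 1 from ⟨hnU, levelMag_mem (hk n)⟩)
  have hup := gibbsSum_le hn K J (phiKJ K J m₀) hmin
  rw [← gibbsSum_univ_eq hn] at hup
  have hlow' := exp_le_gibbsSum hn (hk n) K J (Set.mem_univ (levelMag n (k n)))
  have hZ : 0 < gibbsSum n K J Set.univ :=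
    pos_of_mul_pos_right ((Real.exp_pos _).trans_le hlow') (by positivity)
  rw [mul_neg, Real.exp_neg, exp_two_log_succ hn, le_div_iff₀ hZ,
    inv_mul_le_iff₀ (by positivity)]
  refine hup.trans ?_
  calc ((n : ℝ) + 1) * Real.exp (-(n * phiKJ K J m₀))
      = (n + 1) * Real.exp (n * (phiKJ K J (levelMag n (k n)) - phiKJ K J m₀)) *
          Real.exp (-(n * phiKJ K J (levelMag n (k n)))) := by
        rw [mul_assoc, ← Real.exp_add]; congr 2; ring
    _ ≤ (n + 1) * Real.exp (n * (phiKJ K J (levelMag n (k n)) - phiKJ K J m₀)) *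
          ((n + 1) * gibbsSum n K J (U ∩ Set.Icc (-1) 1)) := by gcongr
    _ = _ := by ring

/-- Large deviation principle for the magnetization per particle in the cubic
Curie–Weiss model: speed `n` and rate function `I_{K,J}`, with the upper bound for
closed sets and the lower bound for (relatively) open sets of `[-1,1]`. -/
theorem stmt_7 (K J : ℝ) (hK : 0 < K) :
    (∀ F : Set ℝ, IsClosed F → F ⊆ Set.Icc (-1) 1 →
      Filter.limsup
          (fun n : ℕ =>
            ENNReal.log (cubicMeasure n K J {x | magPP n x ∈ F}) / ((n : ℝ) : EReal))
          Filter.atTop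
        ≤ -(⨅ m ∈ F, ((rateKJ K J m : ℝ) : EReal))) ∧
    (∀ G : Set ℝ, (∃ U : Set ℝ, IsOpen U ∧ G = U ∩ Set.Icc (-1) 1) →
      -(⨅ m ∈ G, ((rateKJ K J m : ℝ) : EReal)) ≤
        Filter.liminf
          (fun n : ℕ =>
            ENNReal.log (cubicMeasure n K J {x | magPP n x ∈ G}) / ((n : ℝ) : EReal))
          Filter.atTop) := by
  refine ⟨fun F hF hF1 => ldp_upper K J hF hF1, ?_⟩
  rintro G ⟨U, hU, rfl⟩
  exact ldp_lower K J hU
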